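/- Let t⁰ be a solution of the Bethe ansatz equations for the triple (z; μ; V[ν]), ν = M − 2m. Then for every x ∈ ℂ∖{z_1,…,z_n}: D_2(x)·ω(t⁰,z) = (2πi)²·[ −(μ+ν/2)²/4 + Σ_{s=1}^n ( (m_s(m_s+2)/4 + k_s(t⁰,z,μ))/(1 − x/z_s) − (m_s(m_s+2)/4)/(1 − x/z_s)² ) ] · ω(t⁰,z), where k_s(t⁰,z,μ) = (m_s/2)·[(μ − ν/2 + m_s/2) + Σ_{p≠s} m_p·z_s/(z_s − z_p) + 2·Σ_{i=1}^m z_s/(t⁰_i − z_s)]. -/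

import Mathlib

open Complex Finset

namespace Paper

noncomputable section

variable {n : ℕ}

/-- The index set of the natural basis of `V = V_{m 0} ⊗ ⋯ ⊗ V_{m (n-1)}`:
the basis vector `v_{i_1} ⊗ ⋯ ⊗ v_{i_n}` corresponds to the index `(i_1,…,i_n)`. -/
abbrev Idx (m : Fin n → ℕ) := ∀ s : Fin n, Fin (m s + 1)

/-- The tensor product `V = V_{m 0} ⊗ ⋯ ⊗ V_{m (n-1)}` realized concretely as the space of
ℂ-valued functions on the index set of its natural basis. -/
abbrev TV (m : Fin n → ℕ) := Idx m → ℂ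

/-- The linear operator `f ↦ (i ↦ c i * f (g i))`; all the basic operators below are of
this form. -/
def mulShift {ι : Type*} (c : ι → ℂ) (g : ι → ι) : Module.End ℂ (ι → ℂ) where
  toFun f i := c i * f (g i)
  map_add' f h := by funext i; simp [mul_add]
  map_smul' a f := by
    funext i
    simp only [Pi.smul_apply, smul_eq_mul, RingHom.id_apply]
    ring

variable (m : Fin n → ℕ)

/-- `e11` acting in the `s`-th tensor factor: `e11 · v_k = ((m-2k)/2) v_k`. -/
def E11 (s : Fin n) : Module.End ℂ (TV m) :=
  mulShift (fun idx => ((m s : ℂ) - 2 * ((idx s : ℕ) : ℂ)) / 2) id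

/-- `e22` acting in the `s`-th tensor factor: `e22 · v_k = -((m-2k)/2) v_k`. -/
def E22 (s : Fin n) : Module.End ℂ (TV m) :=
  mulShift (fun idx => -(((m s : ℂ) - 2 * ((idx s : ℕ) : ℂ)) / 2)) id

/-- `e21` acting in the `s`-th tensor factor: `e21 · v_k = (k+1) v_{k+1}`. -/
def E21 (s : Fin n) : Module.End ℂ (TV m) :=
  mulShift (fun idx => ((idx s : ℕ) : ℂ)) (fun idx => Function.update idx s (idx s - 1))

/-- `e12` acting in the `s`-th tensor factor: `e12 · v_k = (m-k+1) v_{k-1}`. -/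
def E12 (s : Fin n) : Module.End ℂ (TV m) :=
  mulShift (fun idx => (m s : ℂ) - ((idx s : ℕ) : ℂ)) (fun idx => Function.update idx s (idx s + 1))

/-- The diagonal action `e11 = Σ_s e11^{(s)}` on the tensor product. -/
def e11T : Module.End ℂ (TV m) := ∑ s, E11 m s
def e22T : Module.End ℂ (TV m) := ∑ s, E22 m s
def e21T : Module.End ℂ (TV m) := ∑ s, E21 m s
def e12T : Module.End ℂ (TV m) := ∑ s, E12 m s

/-- `v ∈ V[ν]`, i.e. `(e11 - e22) v = ν v`. -/
def inWt (ν : ℤ) (v : TV m) : Prop := (e11T m - e22T m) v = ((ν : ℤ) : ℂ) • v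

/-- The Weyl involution `σ`, acting by `σ v_k = (-1)^k v_{m-k}` in each factor. -/
def sigmaOp : Module.End ℂ (TV m) :=
  mulShift (fun idx => ∏ s, (-1 : ℂ) ^ (m s - (idx s : ℕ))) (fun idx s => (idx s).rev)

/-- The weight of a basis vector: `wt(i) = Σ_s (m_s - 2 i_s)`. -/
def wt (idx : Idx m) : ℤ := ∑ s, ((m s : ℤ) - 2 * ((idx s : ℕ) : ℤ))

/-- The operator `p(κ) = Σ_{k ≥ 0} e21^k e12^k (1/k!) Π_{j=0}^{k-1} (κ + e22 - e11 - j)^{-1}`.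
The operator `e22 - e11` is diagonal in the chosen basis with eigenvalue `-wt(idx)` on the
basis vector labelled by `idx`, so the (partial) inverses `(κ + e22 - e11 - j)^{-1}` are the
diagonal operators with entries `(κ - wt(idx) - j)⁻¹`.  The sum is finite on `V` since
`e12` is nilpotent:  `e12^k = 0` for `k > M = Σ_s m_s`. -/
def pOp (κ : ℂ) : Module.End ℂ (TV m) :=
  ∑ k ∈ Finset.range ((∑ s, m s) + 1),
    (e21T m) ^ k * (e12T m) ^ k *
      mulShift (fun idx => ((k.factorial : ℂ))⁻¹ *
        ∏ j ∈ Finset.range k, (κ - ((wt m idx : ℤ) : ℂ) - (j : ℂ))⁻¹) id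

/-- The operator `𝒜(κ) = σ ∘ p(κ)`. -/
def Aop (κ : ℂ) : Module.End ℂ (TV m) := sigmaOp m * pOp m κ

/-- `Ω₀^{(s,t)} = e11^{(s)} e11^{(t)} + e22^{(s)} e22^{(t)}`. -/
def Om0 (s t : Fin n) : Module.End ℂ (TV m) := E11 m s * E11 m t + E22 m s * E22 m t

/-- `Ω₁₂^{(s,t)} = e12^{(s)} e21^{(t)}`. -/
def Om12 (s t : Fin n) : Module.End ℂ (TV m) := E12 m s * E21 m t

/-- `Ω₂₁^{(s,t)} = e21^{(s)} e12^{(t)}`. -/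
def Om21 (s t : Fin n) : Module.End ℂ (TV m) := E21 m s * E12 m t

/-- The trigonometric r-matrix `r^{(s,t)}(x) = (Ω₊ x + Ω₋)/(x-1)` acting in the `s`-th and
`t`-th tensor factors, where `Ω₊ = ½Ω₀ + Ω₁₂` and `Ω₋ = ½Ω₀ + Ω₂₁`. -/
def rOp (s t : Fin n) (x : ℂ) : Module.End ℂ (TV m) :=
  (x - 1)⁻¹ • (x • ((2 : ℂ)⁻¹ • Om0 m s t + Om12 m s t) + ((2 : ℂ)⁻¹ • Om0 m s t + Om21 m s t))

/-- The trigonometric Gaudin operators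
`K_s(z,μ) = (μ/2)(e11-e22)^{(s)} + Σ_{t ≠ s} r^{(s,t)}(z_s/z_t)`. -/
def Kop (z : Fin n → ℂ) (μ : ℂ) (s : Fin n) : Module.End ℂ (TV m) :=
  (μ / 2) • (E11 m s - E22 m s) + ∑ t ∈ Finset.univ.erase s, rOp m s t (z s / z t)

/-- The matrix entry `M₁₁(x) = 2πi Σ_s (1-x/z_s)⁻¹ e11^{(s)} - πi e11`. -/
def M11 (z : Fin n → ℂ) (x : ℂ) : Module.End ℂ (TV m) :=
  (2 * (Real.pi : ℂ) * I) • (∑ s, (1 - x / z s)⁻¹ • E11 m s) - ((Real.pi : ℂ) * I) • e11T m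

/-- `M₁₂(x) = 2πi Σ_s (1-x/z_s)⁻¹ e21^{(s)} - 2πi e21`. -/
def M12 (z : Fin n → ℂ) (x : ℂ) : Module.End ℂ (TV m) :=
  (2 * (Real.pi : ℂ) * I) • (∑ s, (1 - x / z s)⁻¹ • E21 m s) -
    (2 * (Real.pi : ℂ) * I) • e21T m

/-- `M₂₁(x) = 2πi Σ_s (1-x/z_s)⁻¹ e12^{(s)}`. -/
def M21 (z : Fin n → ℂ) (x : ℂ) : Module.End ℂ (TV m) :=
  (2 * (Real.pi : ℂ) * I) • (∑ s, (1 - x / z s)⁻¹ • E12 m s)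

/-- `M₂₂(x) = 2πi Σ_s (1-x/z_s)⁻¹ e22^{(s)} - πi e22`. -/
def M22 (z : Fin n → ℂ) (x : ℂ) : Module.End ℂ (TV m) :=
  (2 * (Real.pi : ℂ) * I) • (∑ s, (1 - x / z s)⁻¹ • E22 m s) - ((Real.pi : ℂ) * I) • e22T m

/-- The derivative `(dM₂₂/dx)(x) = 2πi Σ_s z_s⁻¹ (1-x/z_s)⁻² e22^{(s)}`. -/
def M22d (z : Fin n → ℂ) (x : ℂ) : Module.End ℂ (TV m) :=
  (2 * (Real.pi : ℂ) * I) • (∑ s, ((z s)⁻¹ * ((1 - x / z s)⁻¹) ^ 2) • E22 m s)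

/-- The coefficient `D₂(x)` of the universal differential operator
`𝒟 = cdet [[∂_u - πiμ + M₁₁, M₁₂],[M₂₁, ∂_u + πiμ + M₂₂]] = ∂_u² + D₁(x) ∂_u + D₂(x)`
(where `x = e^{-2πiu}`, `∂_u = -2πi x ∂_x`), namely
`D₂(x) = (-πiμ + M₁₁(x)) ∘ (πiμ + M₂₂(x)) - 2πi x (dM₂₂/dx)(x) - M₂₁(x) ∘ M₁₂(x)`. -/
def D2 (z : Fin n → ℂ) (μ : ℂ) (x : ℂ) : Module.End ℂ (TV m) :=
  (-(((Real.pi : ℂ) * I * μ)) • (1 : Module.End ℂ (TV m)) + M11 m z x) *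
      ((((Real.pi : ℂ) * I * μ)) • (1 : Module.End ℂ (TV m)) + M22 m z x)
    - (2 * (Real.pi : ℂ) * I * x) • M22d m z x
    - M21 m z x * M12 m z x

/-- The Bethe ansatz equations for the triple `(z; μ; V[ν])`, `ν = M - 2m'`:  `t` is a tuple
of pairwise distinct complex numbers, each nonzero and distinct from every `z_s`, with
`(1 - μ + ν/2)/t_i + Σ_{j≠i} 2/(t_i - t_j) - Σ_s m_s/(t_i - z_s) = 0` for all `i`. -/
def BAE (z : Fin n → ℂ) (μ : ℂ) {m' : ℕ} (t : Fin m' → ℂ) : Prop :=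
  Function.Injective t ∧ (∀ i, t i ≠ 0) ∧ (∀ i s, t i ≠ z s) ∧
    ∀ i, (1 - μ + ((∑ s, (m s : ℂ)) - 2 * (m' : ℂ)) / 2) / t i
        + (∑ j ∈ Finset.univ.erase i, 2 / (t i - t j))
        - ∑ s, (m s : ℂ) / (t i - z s) = 0

/-- The partial sum `ℓ_1 + ⋯ + ℓ_{s-1}` (0-based). -/
def pref (ℓv : Idx m) (s : Fin n) : ℕ :=
  ∑ u ∈ Finset.univ.filter (fun u => u < s), (ℓv u : ℕ)

/-- Extension of a tuple `t : Fin m' → ℂ` to a function on `ℕ` (by zero). -/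
def extt {m' : ℕ} (t : Fin m' → ℂ) : ℕ → ℂ := fun i => if h : i < m' then t ⟨i, h⟩ else 0

/-- The coordinate `ω_ℓ(t,z) = Σ_{ρ ∈ S_{m'}} Π_{s=1}^n Π_{i=ℓ_1+⋯+ℓ_{s-1}+1}^{ℓ_1+⋯+ℓ_s}
(t_{ρ(i)} - z_s)⁻¹` of the weight function. -/
def omegaCoeff (z : Fin n → ℂ) {m' : ℕ} (t : Fin m' → ℂ) (ℓv : Idx m) : ℂ :=
  ∑ ρ : Equiv.Perm (Fin m'), ∏ s : Fin n,
    ∏ i ∈ Finset.Ico (pref m ℓv s) (pref m ℓv s + (ℓv s : ℕ)), (extt (t ∘ ρ) i - z s)⁻¹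

/-- The Bethe vector (weight function) `ω(t,z) = Σ_{ℓ ∈ C} ω_ℓ(t,z) v_ℓ ∈ V[M - 2m']`. -/
def betheVec (z : Fin n → ℂ) {m' : ℕ} (t : Fin m' → ℂ) : TV m :=
  fun ℓv => if (∑ s, ((ℓv s : ℕ))) = m' then omegaCoeff m z t ℓv else 0

/-- The eigenvalue `k_s(t,z,μ) = (m_s/2)[(μ - ν/2 + m_s/2) + Σ_{p≠s} m_p z_s/(z_s-z_p)
+ 2 Σ_i z_s/(t_i - z_s)]`, with `ν = M - 2m'`. -/
def kEig (z : Fin n → ℂ) (μ : ℂ) {m' : ℕ} (t : Fin m' → ℂ) (s : Fin n) : ℂ :=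
  ((m s : ℂ) / 2) * ((μ - ((∑ u, (m u : ℂ)) - 2 * (m' : ℂ)) / 2 + (m s : ℂ) / 2)
    + (∑ p ∈ Finset.univ.erase s, (m p : ℂ) * z s / (z s - z p))
    + 2 * ∑ i, z s / (t i - z s))

/-- The scalar eigenvalue function `E₂(x, t, z, μ)` of `D₂(x)` on the Bethe vector, i.e.
the coefficient of the fundamental differential operator `ℰ = ∂_u² + E₂(x)`. -/
def E2fun (z : Fin n → ℂ) (μ : ℂ) {m' : ℕ} (t : Fin m' → ℂ) (x : ℂ) : ℂ :=
  (2 * (Real.pi : ℂ) * I) ^ 2 *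
    (-(μ + ((∑ u, (m u : ℂ)) - 2 * (m' : ℂ)) / 2) ^ 2 / 4
      + ∑ s, (((m s : ℂ) * ((m s : ℂ) + 2) / 4 + kEig m z μ t s) / (1 - x / z s)
          - ((m s : ℂ) * ((m s : ℂ) + 2) / 4) / (1 - x / z s) ^ 2))




section abstractpart
variable {n : ℕ} {V : Type*} [AddCommGroup V] [Module ℂ V]

/-- Linear combination of a family of operators. -/
def lc (F : Fin n → Module.End ℂ V) (a : Fin n → ℂ) : Module.End ℂ V := ∑ s, a s • F s

lemma lc_apply (F : Fin n → Module.End ℂ V) (a : Fin n → ℂ) (v : V) :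
    lc F a v = ∑ s, a s • F s v := by
  simp [lc, LinearMap.sum_apply]

lemma lc_add (F : Fin n → Module.End ℂ V) (a b : Fin n → ℂ) (v : V) :
    lc F (a + b) v = lc F a v + lc F b v := by
  simp [lc_apply, add_smul, Finset.sum_add_distrib]

lemma lc_smul (F : Fin n → Module.End ℂ V) (k : ℂ) (a : Fin n → ℂ) (v : V) :
    lc F (k • a) v = k • lc F a v := by
  simp [lc_apply, mul_smul, Finset.smul_sum]

lemma lc_comm {F : Fin n → Module.End ℂ V} (hFF : ∀ s u v, F s (F u v) = F u (F s v))
    (a b : Fin n → ℂ) (v : V) : lc F a (lc F b v) = lc F b (lc F a v) := by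
  simp only [lc_apply, map_sum, map_smul, Finset.smul_sum]
  rw [Finset.sum_comm]
  refine Finset.sum_congr rfl fun s _ => Finset.sum_congr rfl fun u _ => ?_
  rw [hFF, smul_comm]

lemma lc_hF {F h : Fin n → Module.End ℂ V}
    (hhF : ∀ s u v, h s (F u v) = F u (h s v) - if s = u then F u v else 0)
    (a b : Fin n → ℂ) (v : V) :
    lc h a (lc F b v) = lc F b (lc h a v) - lc F (a * b) v := by
  simp only [lc_apply, map_sum, map_smul, Finset.smul_sum, hhF, smul_sub, Finset.sum_sub_distrib]
  congr 1
  · rw [Finset.sum_comm]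
    refine Finset.sum_congr rfl fun s _ => Finset.sum_congr rfl fun u _ => ?_
    rw [smul_comm]
  · refine Finset.sum_congr rfl fun s _ => ?_
    rw [Finset.sum_eq_single s]
    · simp only [if_true, Pi.mul_apply, smul_smul, mul_comm]
    · intro u _ hu
      simp [hu]
    · simp

lemma lc_EF {F h E : Fin n → Module.End ℂ V}
    (hEF : ∀ s u v, E s (F u v) = F u (E s v) + if s = u then (2 : ℂ) • h s v else 0)
    (a b : Fin n → ℂ) (v : V) :
    lc E a (lc F b v) = lc F b (lc E a v) + (2 : ℂ) • lc h (a * b) v := by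
  simp only [lc_apply, map_sum, map_smul, Finset.smul_sum, hEF, smul_add, Finset.sum_add_distrib]
  congr 1
  · rw [Finset.sum_comm]
    refine Finset.sum_congr rfl fun s _ => Finset.sum_congr rfl fun u _ => ?_
    rw [smul_comm]
  · refine Finset.sum_congr rfl fun s _ => ?_
    rw [Finset.sum_eq_single s]
    · simp only [if_true, Pi.mul_apply, smul_smul]
      congr 1
      ring
    · intro u _ hu
      simp [hu]
    · simp

variable {ι : Type*} [DecidableEq ι]

lemma hc_p {F h : Fin n → Module.End ℂ V}
    (hFF : ∀ s u v, F s (F u v) = F u (F s v))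
    (hhF : ∀ s u v, h s (F u v) = F u (h s v) - if s = u then F u v else 0)
    (w : Fin n → ℂ) (c : ι → Fin n → ℂ) (p : Finset ι → V)
    (hp0 : ∀ s, h s (p ∅) = w s • p ∅)
    (hpi : ∀ i S, i ∉ S → p (insert i S) = lc F (c i) (p S))
    (a : Fin n → ℂ) (S : Finset ι) :
    lc h a (p S) = (∑ s, a s * w s) • p S - ∑ i ∈ S, lc F (a * c i) (p (S.erase i)) := by
  induction S using Finset.induction_on with
  | empty => simp [lc_apply, hp0, Finset.sum_smul, mul_smul]
  | insert i S hi ih =>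
    rw [Finset.sum_insert hi, Finset.erase_insert hi, hpi i S hi, lc_hF hhF, ih, map_sub, map_smul,
      map_sum]
    have : ∑ x ∈ S, lc F (c i) (lc F (a * c x) (p (S.erase x)))
        = ∑ x ∈ S, lc F (a * c x) (p ((insert i S).erase x)) := by
      refine Finset.sum_congr rfl fun j hj => ?_
      have hij : i ≠ j := fun e => hi (e ▸ hj)
      rw [lc_comm hFF, Finset.erase_insert_of_ne hij, hpi]
      simp [hi]
    rw [this]
    abel

lemma Ec_p {F h E : Fin n → Module.End ℂ V}
    (hFF : ∀ s u v, F s (F u v) = F u (F s v))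
    (hhF : ∀ s u v, h s (F u v) = F u (h s v) - if s = u then F u v else 0)
    (hEF : ∀ s u v, E s (F u v) = F u (E s v) + if s = u then (2 : ℂ) • h s v else 0)
    (w : Fin n → ℂ) (c : ι → Fin n → ℂ) (p : Finset ι → V)
    (hp0 : ∀ s, h s (p ∅) = w s • p ∅) (hE0 : ∀ s, E s (p ∅) = 0)
    (hpi : ∀ i S, i ∉ S → p (insert i S) = lc F (c i) (p S))
    (a : Fin n → ℂ) (S : Finset ι) :
    lc E a (p S) = ∑ i ∈ S, (2 * ∑ s, (a * c i) s * w s) • p (S.erase i)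
      - ∑ i ∈ S, ∑ j ∈ S.erase i, lc F (a * c i * c j) (p ((S.erase i).erase j)) := by
  induction S using Finset.induction_on with
  | empty => simp [lc_apply, hE0]
  | insert i S hi ih =>
    rw [Finset.sum_insert hi, Finset.sum_insert hi, Finset.erase_insert hi, hpi i S hi,
      lc_EF hEF, ih, map_sub, map_sum, map_sum, hc_p hFF hhF w c p hp0 hpi]
    have h1 : ∑ x ∈ S, lc F (c i) ((2 * ∑ s, (a * c x) s * w s) • p (S.erase x))
        = ∑ x ∈ S, (2 * ∑ s, (a * c x) s * w s) • p ((insert i S).erase x) := by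
      refine Finset.sum_congr rfl fun j hj => ?_
      have hij : i ≠ j := fun e => hi (e ▸ hj)
      rw [map_smul, Finset.erase_insert_of_ne hij, hpi]
      simp [hi]
    have h2 : ∑ x ∈ S, lc F (c i) (∑ j ∈ S.erase x, lc F (a * c x * c j) (p ((S.erase x).erase j)))
        + ∑ x ∈ S, lc F (a * c i * c x) (p (S.erase x))
        = ∑ x ∈ S, ∑ j ∈ (insert i S).erase x,
          lc F (a * c x * c j) (p (((insert i S).erase x).erase j)) := by
      rw [← Finset.sum_add_distrib]
      refine Finset.sum_congr rfl fun j hj => ?_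
      have hij : i ≠ j := fun e => hi (e ▸ hj)
      have hi' : i ∉ S.erase j := by simp [hi]
      rw [Finset.erase_insert_of_ne hij, Finset.sum_insert hi', Finset.erase_insert hi', map_sum,
        add_comm]
      congr 1
      · congr 2
        ring
      · refine Finset.sum_congr rfl fun k hk => ?_
        have hik : i ≠ k := fun e => hi' (e ▸ hk)
        rw [lc_comm hFF, Finset.erase_insert_of_ne hik, hpi]
        simp [hi]
    rw [h1, ← h2]
    module

/-- The reduced operator. -/
def Dred (F h E : Fin n → Module.End ℂ V) (μ : ℂ) (A : Fin n → ℂ) (v : V) : V :=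
  -((μ / 2) ^ 2 • v) + μ • lc h (A - (fun _ => 1 / 2)) v
    - lc h (A - (fun _ => 1 / 2)) (lc h (A - (fun _ => 1 / 2)) v)
    + lc h (A * A - A) v
    - lc E A (lc F (A - 1) v)

lemma D_p {F h E : Fin n → Module.End ℂ V}
    (hFF : ∀ s u v, F s (F u v) = F u (F s v))
    (hhF : ∀ s u v, h s (F u v) = F u (h s v) - if s = u then F u v else 0)
    (hEF : ∀ s u v, E s (F u v) = F u (E s v) + if s = u then (2 : ℂ) • h s v else 0)
    (w : Fin n → ℂ) (c : ι → Fin n → ℂ) (p : Finset ι → V)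
    (hp0 : ∀ s, h s (p ∅) = w s • p ∅) (hE0 : ∀ s, E s (p ∅) = 0)
    (hpi : ∀ i S, i ∉ S → p (insert i S) = lc F (c i) (p S))
    (μ : ℂ) (A : Fin n → ℂ) (S : Finset ι)
    (κ r : ι → ℂ) (T1 T2 : ι → ι → ℂ)
    (hη : ∀ i ∈ S, (A - (fun _ => 1 / 2)) * c i = κ i • c i + r i • (A - 1))
    (hcc : ∀ i ∈ S, ∀ j ∈ S, i ≠ j →
      A * c i * c j = T1 i j • c i + T2 i j • c j + (r i * r j) • (A - 1))
    (hB : ∀ i ∈ S, (2 * (∑ s, (A s - 1 / 2) * w s) - μ) * r i - 2 * (∑ s, (A * c i) s * w s)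
      + ∑ j ∈ S.erase i, (T1 j i + T2 i j - 2 * κ j * r i) = 0) :
    Dred F h E μ A (p S) =
      (-(μ / 2) ^ 2 + μ * (∑ s, (A s - 1 / 2) * w s) - (∑ s, (A s - 1 / 2) * w s) ^ 2
        - (∑ s, (A s * A s - A s) * w s) - (S.card : ℂ) / 4
        + ∑ i ∈ S, (2 * (∑ s, (A s - 1 / 2) * w s) - μ) * κ i
        - ∑ i ∈ S, ∑ j ∈ S.erase i, κ i * κ j) • p S := by
  set η : Fin n → ℂ := A - (fun _ => 1 / 2) with hηdef
  set B : Fin n → ℂ := A - 1 with hBdef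
  have hH := hc_p hFF hhF w c p hp0 hpi
  have hEc := Ec_p hFF hhF hEF w c p hp0 hE0 hpi
  have hpe : ∀ (S : Finset ι) i, i ∈ S → lc F (c i) (p (S.erase i)) = p S := by
    intro S i hi
    rw [← hpi i _ (by simp), Finset.insert_erase hi]
  set lη := ∑ s, (A s - 1 / 2) * w s with hlη
  have hlη' : ∑ s, η s * w s = lη := rfl
  set lq := ∑ s, (A s * A s - A s) * w s with hlq
  have hlq' : ∑ s, (A * A - A) s * w s = lq := rfl
  -- single term
  have hs1 : ∀ i ∈ S, lc F (η * c i) (p (S.erase i)) = κ i • p S + r i • lc F B (p (S.erase i)) := by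
    intro i hi
    rw [hη i hi, lc_add, lc_smul, lc_smul, hpe S i hi]
  have hs2 : ∀ i ∈ S, lc F (η * (η * c i)) (p (S.erase i))
      = lc F ((A * A - A) * c i) (p (S.erase i)) + (1 / 4 : ℂ) • p S := by
    intro i hi
    have : η * (η * c i) = (A * A - A) * c i + (1 / 4 : ℂ) • c i := by
      ext s
      simp only [hηdef, Pi.mul_apply, Pi.sub_apply, Pi.add_apply, Pi.smul_apply, smul_eq_mul]
      ring
    rw [this, lc_add, lc_smul, hpe S i hi]
  have hd1 : ∀ i ∈ S, ∀ j ∈ S.erase i,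
      lc F (η * c i) (lc F (η * c j) (p ((S.erase i).erase j)))
      = (κ i * κ j) • p S + (κ i * r j) • lc F B (p (S.erase j))
        + (κ j * r i) • lc F B (p (S.erase i))
        + (r i * r j) • lc F B (lc F B (p ((S.erase i).erase j))) := by
    intro i hi j hj
    have hj' := Finset.mem_of_mem_erase hj
    have hji := Finset.ne_of_mem_erase hj
    rw [hη i hi, hη j hj', lc_add F _ _ (p _), lc_smul, lc_smul, hpe _ j hj, lc_add]
    simp only [lc_smul, map_add, map_smul]
    rw [hpe S i hi, lc_comm hFF (c i) B, Finset.erase_right_comm, hpe (S.erase j) i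
      (Finset.mem_erase.2 ⟨hji.symm, hi⟩)]
    module
  have hd2 : ∀ i ∈ S, ∀ j ∈ S.erase i,
      lc F (A * c i * c j) (p ((S.erase i).erase j))
      = T1 i j • p (S.erase j) + T2 i j • p (S.erase i)
        + (r i * r j) • lc F B (p ((S.erase i).erase j)) := by
    intro i hi j hj
    have hj' := Finset.mem_of_mem_erase hj
    have hji := Finset.ne_of_mem_erase hj
    rw [hcc i hi j hj' hji.symm, lc_add, lc_add, lc_smul, lc_smul, lc_smul, hpe _ j hj,
      Finset.erase_right_comm, hpe (S.erase j) i (Finset.mem_erase.2 ⟨hji.symm, hi⟩)]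
  have hsw : ∀ f : ι → ι → V, ∑ i ∈ S, ∑ j ∈ S.erase i, f i j = ∑ i ∈ S, ∑ j ∈ S.erase i, f j i := by
    intro f
    apply Finset.sum_comm'
    intro x y
    simp only [Finset.mem_erase]
    tauto
  have hX : lc h η (lc h η (p S)) = lη ^ 2 • p S - (2 * lη) • ∑ i ∈ S, lc F (η * c i) (p (S.erase i))
      + ∑ i ∈ S, lc F (η * (η * c i)) (p (S.erase i))
      + ∑ i ∈ S, ∑ j ∈ S.erase i, lc F (η * c i) (lc F (η * c j) (p ((S.erase i).erase j))) := by
    rw [hH η S, map_sub, map_smul, hH η S, map_sum, hlη']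
    have : ∀ i ∈ S, lc h η (lc F (η * c i) (p (S.erase i)))
        = lη • lc F (η * c i) (p (S.erase i)) - lc F (η * (η * c i)) (p (S.erase i))
        - ∑ j ∈ S.erase i, lc F (η * c i) (lc F (η * c j) (p ((S.erase i).erase j))) := by
      intro i hi
      rw [lc_hF hhF, hH, hlη', map_sub, map_smul, map_sum]
      abel
    rw [Finset.sum_congr rfl this, Finset.sum_sub_distrib, Finset.sum_sub_distrib,
      ← Finset.smul_sum]
    module
  have hY : lc E A (lc F B (p S)) = ∑ i ∈ S, (2 * ∑ s, (A * c i) s * w s) • lc F B (p (S.erase i))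
      - ∑ i ∈ S, ∑ j ∈ S.erase i, lc F B (lc F (A * c i * c j) (p ((S.erase i).erase j)))
      + (2 : ℂ) • lc h (A * A - A) (p S) := by
    have : A * B = A * A - A := by rw [hBdef]; ring
    rw [lc_EF hEF, this, hEc, map_sub, map_sum, map_sum]
    simp only [map_smul, map_sum]
  have hZ : ∑ i ∈ S, ∑ j ∈ S.erase i, lc F B (lc F (A * c i * c j) (p ((S.erase i).erase j)))
      - ∑ i ∈ S, ∑ j ∈ S.erase i, lc F (η * c i) (lc F (η * c j) (p ((S.erase i).erase j)))
      = ∑ i ∈ S, (∑ j ∈ S.erase i, (T1 j i + T2 i j - 2 * κ j * r i))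
          • lc F B (p (S.erase i))
        - (∑ i ∈ S, ∑ j ∈ S.erase i, κ i * κ j) • p S := by
    have e1 : ∑ i ∈ S, ∑ j ∈ S.erase i, lc F B (lc F (A * c i * c j) (p ((S.erase i).erase j)))
      - ∑ i ∈ S, ∑ j ∈ S.erase i, lc F (η * c i) (lc F (η * c j) (p ((S.erase i).erase j)))
      = ∑ i ∈ S, ∑ j ∈ S.erase i, (T1 i j - κ i * r j) • lc F B (p (S.erase j))
        + ∑ i ∈ S, ∑ j ∈ S.erase i, ((T2 i j - κ j * r i) • lc F B (p (S.erase i))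
          - (κ i * κ j) • p S) := by
      simp only [← Finset.sum_sub_distrib, ← Finset.sum_add_distrib]
      refine Finset.sum_congr rfl fun i hi => Finset.sum_congr rfl fun j hj => ?_
      rw [hd1 i hi j hj, hd2 i hi j hj, map_add, map_add, map_smul, map_smul, map_smul]
      module
    rw [e1, hsw]
    simp only [Finset.sum_smul]
    simp only [← Finset.sum_sub_distrib, ← Finset.sum_add_distrib]
    refine Finset.sum_congr rfl fun i hi => Finset.sum_congr rfl fun j hj => ?_
    module
  have hU : ∑ i ∈ S, lc F (η * c i) (p (S.erase i))
      = (∑ i ∈ S, κ i) • p S + ∑ i ∈ S, r i • lc F B (p (S.erase i)) := by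
    rw [Finset.sum_congr rfl hs1, Finset.sum_add_distrib, Finset.sum_smul]
  have hW : ∑ i ∈ S, lc F (η * (η * c i)) (p (S.erase i))
      = ∑ i ∈ S, lc F ((A * A - A) * c i) (p (S.erase i)) + ((S.card : ℂ) / 4) • p S := by
    rw [Finset.sum_congr rfl hs2, Finset.sum_add_distrib, Finset.sum_const,
      ← Nat.cast_smul_eq_nsmul ℂ, smul_smul]
    congr 2
    ring
  have hfin : (2 * lη - μ) • ∑ i ∈ S, r i • lc F B (p (S.erase i))
      - ∑ i ∈ S, (2 * ∑ s, (A * c i) s * w s) • lc F B (p (S.erase i))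
      + ∑ i ∈ S, (∑ j ∈ S.erase i, (T1 j i + T2 i j - 2 * κ j * r i))
          • lc F B (p (S.erase i)) = 0 := by
    rw [Finset.smul_sum, ← Finset.sum_sub_distrib, ← Finset.sum_add_distrib]
    refine Finset.sum_eq_zero fun i hi => ?_
    rw [smul_smul, ← sub_smul, ← add_smul, hB i hi, zero_smul]
  unfold Dred
  rw [← hηdef, ← hBdef, hX, hY, hH (A * A - A) S, hlq', hH η S, hlη', hW, hU, ← Finset.mul_sum]
  have hZ' := sub_eq_iff_eq_add.1 hZ
  rw [hZ']
  linear_combination (norm := module) hfin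
end abstractpart

section modelpart
variable {n : ℕ} (m : Fin n → ℕ)

lemma mulShift_apply {ι : Type*} (c : ι → ℂ) (g : ι → ι) (f : ι → ℂ) (i : ι) :
    mulShift c g f i = c i * f (g i) := rfl

lemma E22_eq (s : Fin n) : E22 m s = - E11 m s := by
  ext1 v
  simp only [E22, E11]
  ext f
  simp [mulShift_apply]

lemma val_sub_one' {k : ℕ} (a : Fin (k + 1)) (h : a ≠ 0) : ((a - 1 : Fin (k + 1)) : ℕ) + 1 = a := by
  have h1 := Fin.val_sub_one_of_ne_zero h
  have : (a : ℕ) ≠ 0 := fun e => h (Fin.ext e)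
  omega

lemma val_add_one' {k : ℕ} (a : Fin (k + 1)) (h : (a : ℕ) ≠ k) :
    ((a + 1 : Fin (k + 1)) : ℕ) = a + 1 := by
  apply Fin.val_add_one_of_lt'
  omega

lemma rel_FF (s u : Fin n) (v : TV m) : E21 m s (E21 m u v) = E21 m u (E21 m s v) := by
  rcases eq_or_ne s u with rfl | h
  · rfl
  · ext f
    simp only [E21, mulShift_apply, Function.update_of_ne h, Function.update_of_ne h.symm]
    rw [Function.update_comm h.symm]
    ring

lemma rel_hF (s u : Fin n) (v : TV m) :
    E11 m s (E21 m u v) = E21 m u (E11 m s v) - if s = u then E21 m u v else 0 := by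
  rcases eq_or_ne s u with rfl | h
  · ext f
    simp only [if_true, E21, E11, mulShift_apply, Pi.sub_apply, id, Function.update_self]
    by_cases h0 : f s = 0
    · simp [h0]
    · have := val_sub_one' (f s) h0
      have : ((f s : ℕ) : ℂ) = ((f s - 1 : Fin (m s + 1)) : ℕ) + 1 := by
        rw [← this]; push_cast; simp
      rw [this]
      ring
  · ext f
    simp only [h, if_false, E21, E11, mulShift_apply, Pi.sub_apply, id, Function.update_of_ne h,
      Pi.zero_apply]
    ring

lemma rel_EF (s u : Fin n) (v : TV m) :
    E12 m s (E21 m u v) = E21 m u (E12 m s v) + if s = u then (2 : ℂ) • E11 m s v else 0 := by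
  rcases eq_or_ne s u with rfl | h
  · ext f
    simp only [if_true, E21, E11, E12, mulShift_apply, Pi.add_apply, Pi.smul_apply, smul_eq_mul,
      id, Function.update_self, Function.update_idem, add_sub_cancel_right, sub_add_cancel,
      Function.update_eq_self]
    have e1 : ((m s : ℂ) - ((f s : ℕ) : ℂ)) * (((f s + 1 : Fin (m s + 1)) : ℕ) : ℂ)
        = ((m s : ℂ) - ((f s : ℕ) : ℂ)) * (((f s : ℕ) : ℂ) + 1) := by
      by_cases h : (f s : ℕ) = m s
      · simp [h]
      · rw [val_add_one' _ h]
        push_cast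
        ring
    have e2 : ((f s : ℕ) : ℂ) * ((m s : ℂ) - (((f s - 1 : Fin (m s + 1)) : ℕ) : ℂ))
        = ((f s : ℕ) : ℂ) * ((m s : ℂ) - (((f s : ℕ) : ℂ) - 1)) := by
      by_cases h : f s = 0
      · simp [h]
      · have := val_sub_one' _ h
        have : ((f s : ℕ) : ℂ) = ((f s - 1 : Fin (m s + 1)) : ℕ) + 1 := by
          rw [← this]; push_cast; simp
        rw [this]
        ring
    linear_combination (e1 - e2) * v f
  · ext f
    simp only [h, if_false, E21, E12, mulShift_apply, Pi.add_apply, Function.update_of_ne h,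
      Function.update_of_ne h.symm, Pi.zero_apply]
    rw [Function.update_comm h.symm]
    ring

/-- Multi-index as a finitely supported function. -/
def toFs (f : Idx m) : Fin n →₀ ℕ := Finsupp.equivFunOnFinite.symm fun s => (f s : ℕ)

lemma toFs_apply (f : Idx m) (s : Fin n) : toFs m f s = (f s : ℕ) := rfl

/-- The polynomial model. -/
def Phi : MvPolynomial (Fin n) ℂ →ₗ[ℂ] TV m where
  toFun q f := MvPolynomial.coeff (toFs m f) q * ∏ s, ((f s : ℕ).factorial : ℂ)
  map_add' p q := by
    ext f
    simp [add_mul]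
  map_smul' a q := by
    ext f
    simp [mul_assoc]

lemma Phi_apply (q : MvPolynomial (Fin n) ℂ) (f : Idx m) :
    Phi m q f = MvPolynomial.coeff (toFs m f) q * ∏ s, ((f s : ℕ).factorial : ℂ) := rfl

lemma Phi_X_mul (s : Fin n) (q : MvPolynomial (Fin n) ℂ) :
    Phi m (MvPolynomial.X s * q) = E21 m s (Phi m q) := by
  ext f
  simp only [Phi_apply, E21, mulShift_apply]
  rw [MvPolynomial.coeff_X_mul']
  by_cases h : f s = 0
  · simp [h, toFs_apply]
  · have h' := val_sub_one' _ h
    have hs : s ∈ (toFs m f).support := by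
      simp only [Finsupp.mem_support_iff, toFs_apply]
      omega
    rw [if_pos hs]
    have e1 : toFs m f - Finsupp.single s 1 = toFs m (Function.update f s (f s - 1)) := by
      ext u
      rcases eq_or_ne u s with rfl | hu
      · simp only [Finsupp.tsub_apply, toFs_apply, Finsupp.single_eq_same, Function.update_self]
        omega
      · simp [toFs_apply, Function.update_of_ne hu, Finsupp.single_eq_of_ne hu]
    have e2 : ∏ u, ((f u : ℕ).factorial : ℂ) = ((f s : ℕ) : ℂ) *
        ∏ u, ((Function.update f s (f s - 1) u : ℕ).factorial : ℂ) := by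
      rw [← Finset.mul_prod_erase _ _ (Finset.mem_univ s),
        ← Finset.mul_prod_erase _ (fun u => ((Function.update f s (f s - 1) u : ℕ).factorial : ℂ))
          (Finset.mem_univ s), ← mul_assoc]
      congr 1
      · simp only [Function.update_self]
        rw [← h', Nat.factorial_succ]
        push_cast
        simp
      · refine Finset.prod_congr rfl fun u hu => ?_
        rw [Function.update_of_ne (Finset.ne_of_mem_erase hu)]
    rw [e1, e2]
    ring

lemma Phi_one_h (s : Fin n) : E11 m s (Phi m 1) = ((m s : ℂ) / 2) • Phi m 1 := by
  ext f
  simp only [Phi_apply, E11, mulShift_apply, id, Pi.smul_apply, smul_eq_mul]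
  by_cases h : f s = 0
  · simp [h]
  · rw [MvPolynomial.coeff_one, if_neg]
    · simp
    · intro e
      apply h
      have := DFunLike.congr_fun e s
      exact Fin.ext (by simpa [toFs_apply] using this.symm)

lemma Phi_one_E (s : Fin n) : E12 m s (Phi m 1) = 0 := by
  ext f
  simp only [Phi_apply, E12, mulShift_apply, Pi.zero_apply]
  by_cases h : (f s : ℕ) = m s
  · simp [h]
  · rw [MvPolynomial.coeff_one, if_neg]
    · simp
    · intro e
      have := DFunLike.congr_fun e s
      simp only [toFs_apply, Function.update_self, val_add_one' _ h] at this
      simp at this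

/-- Linear form. -/
def Lf (z : Fin n → ℂ) (y : ℂ) : MvPolynomial (Fin n) ℂ :=
  ∑ s, (y - z s)⁻¹ • MvPolynomial.X s

lemma Phi_Lf_mul (z : Fin n → ℂ) (y : ℂ) (q : MvPolynomial (Fin n) ℂ) :
    Phi m (Lf z y * q) = lc (E21 m) (fun s => (y - z s)⁻¹) (Phi m q) := by
  simp only [Lf, Finset.sum_mul, map_sum, lc_apply, smul_mul_assoc, map_smul, Phi_X_mul]

end modelpart

section combpart

lemma exists_perm_fiber {α β : Type*} [Fintype α] [DecidableEq β] (f g : α → β)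
    (h : ∀ s, Fintype.card {a // f a = s} = Fintype.card {a // g a = s}) :
    ∃ ρ : Equiv.Perm α, g ∘ ρ = f := by
  refine ⟨(Equiv.sigmaFiberEquiv f).symm.trans
    ((Equiv.sigmaCongrRight fun s => Fintype.equivOfCardEq (h s)).trans
      (Equiv.sigmaFiberEquiv g)), ?_⟩
  ext a
  simp only [Function.comp_apply, Equiv.trans_apply]
  exact (Fintype.equivOfCardEq (h (f a)) ⟨a, rfl⟩).2

lemma sum_perm_slot {α : Type*} [Fintype α] [DecidableEq α] {n : ℕ} (g : α → Fin n)
    (c : α → Fin n → ℂ) :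
    ∑ ρ : Equiv.Perm α, ∏ i, c (ρ i) (g i) =
      (∏ s, ((Fintype.card {a // g a = s}).factorial : ℂ)) *
      ∑ f : α → Fin n with ∀ s, Fintype.card {a // f a = s} = Fintype.card {a // g a = s},
        ∏ i, c i (f i) := by
  have e1 : ∑ ρ : Equiv.Perm α, ∏ i, c (ρ i) (g i)
      = ∑ ρ : Equiv.Perm α, ∏ i, c i ((g ∘ ρ) i) := by
    refine Fintype.sum_equiv (Equiv.inv (Equiv.Perm α)) _ _ fun ρ => ?_
    refine Fintype.prod_equiv ρ _ _ fun i => ?_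
    simp
  rw [e1, Finset.mul_sum]
  rw [← Finset.sum_fiberwise_of_maps_to (s := univ)
    (t := {f : α → Fin n | ∀ s, Fintype.card {a // f a = s} = Fintype.card {a // g a = s}})
    (g := fun ρ : Equiv.Perm α => g ∘ ρ)]
  · refine Finset.sum_congr rfl fun f hf => ?_
    rw [Finset.mem_filter] at hf
    obtain ⟨ρ0, h0⟩ := exists_perm_fiber f g hf.2
    have e2 : ∀ ρ ∈ ({ρ : Equiv.Perm α | g ∘ ρ = f} : Finset _),
        ∏ i, c i ((g ∘ ρ) i) = ∏ i, c i (f i) := by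
      intro ρ hρ
      rw [(Finset.mem_filter.1 hρ).2]
    rw [Finset.sum_congr rfl e2, Finset.sum_const, nsmul_eq_mul]
    congr 1
    have e3 := DomMulAct.stabilizer_card g
    rw [← Nat.cast_prod, ← e3, Fintype.card_subtype]
    congr 1
    refine Finset.card_bij (fun ρ _ => ρ * ρ0⁻¹) ?_ ?_ ?_
    · intro ρ hρ
      rw [Finset.mem_filter] at hρ ⊢
      refine ⟨Finset.mem_univ _, ?_⟩
      rw [Equiv.Perm.coe_mul, ← Function.comp_assoc, hρ.2, ← h0, Function.comp_assoc]
      ext a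
      simp
    · intro a _ b _ hab
      simpa using hab
    · intro ρ hρ
      refine ⟨ρ * ρ0, ?_, by simp⟩
      rw [Finset.mem_filter] at hρ ⊢
      refine ⟨Finset.mem_univ _, ?_⟩
      rw [Equiv.Perm.coe_mul, ← Function.comp_assoc, hρ.2, h0]
  · intro ρ _
    rw [Finset.mem_filter]
    refine ⟨Finset.mem_univ _, fun s => ?_⟩
    exact Fintype.card_congr (Equiv.subtypeEquiv ρ fun a => by simp)

variable {n : ℕ} (m : Fin n → ℕ)

lemma coeff_prod_Lf (z : Fin n → ℂ) {m' : ℕ} (t : Fin m' → ℂ) (l : Fin n →₀ ℕ) :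
    MvPolynomial.coeff l (∏ i, Lf z (t i)) =
      ∑ f : Fin m' → Fin n with ∀ s, Fintype.card {a // f a = s} = l s,
        ∏ i, (t i - z (f i))⁻¹ := by
  unfold Lf
  rw [Finset.prod_univ_sum, Fintype.piFinset_univ, MvPolynomial.coeff_sum, Finset.sum_filter]
  refine Finset.sum_congr rfl fun f _ => ?_
  have e1 : ∏ i, (t i - z (f i))⁻¹ • (MvPolynomial.X (f i) : MvPolynomial (Fin n) ℂ)
      = MvPolynomial.monomial (∑ i, Finsupp.single (f i) 1) (∏ i, (t i - z (f i))⁻¹) := by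
    rw [MvPolynomial.monomial_sum_prod]
    refine Finset.prod_congr rfl fun i _ => ?_
    rw [MvPolynomial.X, MvPolynomial.smul_monomial, smul_eq_mul, mul_one]
  rw [e1, MvPolynomial.coeff_monomial]
  have e2 : (∑ i, Finsupp.single (f i) 1 = l) ↔ ∀ s, Fintype.card {a // f a = s} = l s := by
    rw [Finsupp.ext_iff]
    refine forall_congr' fun s => ?_
    rw [Finsupp.finsetSum_apply, Fintype.card_subtype, Finset.card_filter]
    simp only [Finsupp.single_apply]
  simp only [e2]

lemma pref_eq (l : Idx m) (s : Fin n) (j : Fin (l s : ℕ)) :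
    ((finSigmaFinEquiv (⟨s, j⟩ : (s : Fin n) × Fin (l s : ℕ)) : Fin _) : ℕ) = pref m l s + j := by
  rw [finSigmaFinEquiv_apply]
  congr 1
  unfold pref
  simp only
  refine Finset.sum_bij (fun i _ => Fin.castLE s.2.le i) ?_ ?_ ?_ ?_
  · intro i _
    rw [Finset.mem_filter]
    exact ⟨Finset.mem_univ _, i.2⟩
  · intro a _ b _ hab
    simpa using hab
  · intro b hb
    have hb' : b < s := by simpa using hb
    exact ⟨⟨b, hb'⟩, Finset.mem_univ _, rfl⟩
  · intro i _
    rfl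

lemma omega_eq (z : Fin n → ℂ) {m' : ℕ} (t : Fin m' → ℂ) (l : Idx m)
    (hl : ∑ s, (l s : ℕ) = m') :
    omegaCoeff m z t l = Phi m (∏ i, Lf z (t i)) l := by
  subst hl
  set g : Fin (∑ s, (l s : ℕ)) → Fin n := fun i => (finSigmaFinEquiv.symm i).1 with hg
  have hcard : ∀ s, Fintype.card {a // g a = s} = (l s : ℕ) := by
    intro s
    have e : {a // g a = s} ≃ {k : (s : Fin n) × Fin (l s : ℕ) // k.1 = s} :=
      Equiv.subtypeEquiv finSigmaFinEquiv.symm fun a => Iff.rfl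
    rw [Fintype.card_congr e, Fintype.card_congr (Equiv.sigmaSubtype s)]
    simp
  have h := sum_perm_slot g (fun i s => (t i - z s)⁻¹)
  simp only [hcard] at h
  rw [Phi_apply, coeff_prod_Lf, mul_comm]
  refine Eq.trans ?_ (h.trans ?_)
  swap
  · rfl
  unfold omegaCoeff
  refine Finset.sum_congr rfl fun ρ _ => ?_
  rw [← Equiv.prod_comp finSigmaFinEquiv, Fintype.prod_sigma]
  refine Finset.prod_congr rfl fun s _ => ?_
  rw [Finset.prod_Ico_eq_prod_range, add_tsub_cancel_left, Finset.prod_range]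
  refine Finset.prod_congr rfl fun j _ => ?_
  have h1 := pref_eq m l s j
  have h2 : g (finSigmaFinEquiv ⟨s, j⟩) = s := by simp [hg]
  rw [h2, ← h1]
  simp only [extt, Fin.is_lt, dite_true, Fin.eta, Function.comp_apply]

lemma betheVec_eq (z : Fin n → ℂ) {m' : ℕ} (t : Fin m' → ℂ) :
    betheVec m z t = Phi m (∏ i, Lf z (t i)) := by
  ext l
  unfold betheVec
  split_ifs with h
  · exact omega_eq m z t l h
  · rw [Phi_apply, coeff_prod_Lf, Finset.filter_false_of_mem, Finset.sum_empty, zero_mul]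
    intro f _ hf
    apply h
    simp only [toFs_apply] at hf
    rw [← Finset.sum_congr rfl fun s _ => hf s, ← Fintype.card_sigma,
      Fintype.card_congr (Equiv.sigmaFiberEquiv f), Fintype.card_fin]

end combpart

section scalarpart

lemma sq_sum_pf {ι : Type*} [Fintype ι] [DecidableEq ι] (u : ι → ℂ) (a : ι → ι → ℂ)
    (h : ∀ i j, i ≠ j → u i * u j = a i j * u i + a j i * u j) :
    (∑ i, u i) ^ 2 = ∑ i, u i ^ 2 + 2 * ∑ i, u i * ∑ j ∈ univ.erase i, a i j := by
  have e1 : (∑ i, u i) ^ 2 = ∑ i, u i ^ 2 + ∑ i, ∑ j ∈ univ.erase i, u i * u j := by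
    rw [sq, Finset.sum_mul_sum, ← Finset.sum_add_distrib]
    refine Finset.sum_congr rfl fun i _ => ?_
    rw [← Finset.add_sum_erase _ _ (Finset.mem_univ i), sq]
  have e2 : ∑ i, ∑ j ∈ univ.erase i, u i * u j
      = ∑ i, ∑ j ∈ univ.erase i, a i j * u i + ∑ i, ∑ j ∈ univ.erase i, a j i * u j := by
    rw [← Finset.sum_add_distrib]
    refine Finset.sum_congr rfl fun i _ => ?_
    rw [← Finset.sum_add_distrib]
    refine Finset.sum_congr rfl fun j hj => ?_
    exact h i j (Finset.ne_of_mem_erase hj).symm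
  have e3 : ∑ i, ∑ j ∈ univ.erase i, a j i * u j = ∑ i, ∑ j ∈ univ.erase i, a i j * u i := by
    apply Finset.sum_comm'
    intro x y
    simp [eq_comm]
  rw [e1, e2, e3]
  simp only [Finset.mul_sum]
  rw [← Finset.sum_add_distrib]
  congr 1
  refine Finset.sum_congr rfl fun i _ => ?_
  rw [← Finset.sum_add_distrib]
  refine Finset.sum_congr rfl fun j _ => ?_
  ring

lemma sum_erase_mul {ι : Type*} [Fintype ι] [DecidableEq ι] (u : ι → ℂ) :
    ∑ i, ∑ j ∈ univ.erase i, u i * u j = (∑ i, u i) ^ 2 - ∑ i, u i ^ 2 := by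
  rw [sq (∑ i, u i), Finset.sum_mul_sum, ← Finset.sum_sub_distrib]
  refine Finset.sum_congr rfl fun i _ => ?_
  rw [← Finset.add_sum_erase _ _ (Finset.mem_univ i)]
  ring

variable {n : ℕ}

lemma bae_hB (m : Fin n → ℕ) (z : Fin n → ℂ) (hz0 : ∀ s, z s ≠ 0)
    (μ : ℂ) {m' : ℕ} (t : Fin m' → ℂ) (ht : BAE m z μ t)
    (x : ℂ) (hx : ∀ s, x ≠ z s) (hxt : ∀ i, x ≠ t i) (i : Fin m') :
    (2 * (∑ s, ((1 - x / z s)⁻¹ - 1 / 2) * ((m s : ℂ) / 2)) - μ) * (t i - x)⁻¹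
      - 2 * (∑ s, ((1 - x / z s)⁻¹ * (t i - z s)⁻¹) * ((m s : ℂ) / 2))
      + ∑ j ∈ univ.erase i, (t j * (t j - x)⁻¹ / (t i - t j)
        + (x * (t i - x)⁻¹ * (t j - x)⁻¹ - t i * (t i - x)⁻¹ / (t j - t i))
        - 2 * ((t j + x) / (2 * (t j - x))) * (t i - x)⁻¹) = 0 := by
  obtain ⟨hinj, ht0, htz, hb⟩ := ht
  have hti : t i ≠ 0 := ht0 i
  have hxi : t i - x ≠ 0 := sub_ne_zero.2 (hxt i).symm
  have e1 : 2 * (∑ s, ((1 - x / z s)⁻¹ - 1 / 2) * ((m s : ℂ) / 2)) * (t i - x)⁻¹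
      - 2 * (∑ s, ((1 - x / z s)⁻¹ * (t i - z s)⁻¹) * ((m s : ℂ) / 2))
      = (t i - x)⁻¹ * ((∑ s, (m s : ℂ)) / 2 - t i * ∑ s, (m s : ℂ) / (t i - z s)) := by
    simp only [Finset.mul_sum, Finset.sum_mul, Finset.sum_div, ← Finset.sum_sub_distrib]
    refine Finset.sum_congr rfl fun s _ => ?_
    have h1 : z s - x ≠ 0 := sub_ne_zero.2 (hx s).symm
    have h2 : t i - z s ≠ 0 := sub_ne_zero.2 (htz i s)
    have h3 := hz0 s
    have h4 : (1 - x / z s)⁻¹ = z s / (z s - x) := by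
      rw [one_sub_div h3, inv_div]
    rw [h4]
    field_simp
    ring
  have e2 : ∑ j ∈ univ.erase i, (t j * (t j - x)⁻¹ / (t i - t j)
        + (x * (t i - x)⁻¹ * (t j - x)⁻¹ - t i * (t i - x)⁻¹ / (t j - t i))
        - 2 * ((t j + x) / (2 * (t j - x))) * (t i - x)⁻¹)
      = (t i - x)⁻¹ * (t i * (∑ j ∈ univ.erase i, 2 / (t i - t j)) - ((m' : ℂ) - 1)) := by
    have : ((m' : ℂ) - 1) = ∑ j ∈ univ.erase i, (1 : ℂ) := by
      have : 1 ≤ m' := i.pos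
      simp [Finset.card_erase_of_mem, Nat.cast_sub this]
    rw [this]
    simp only [Finset.mul_sum, ← Finset.sum_sub_distrib]
    refine Finset.sum_congr rfl fun j hj => ?_
    have hji := Finset.ne_of_mem_erase hj
    have h1 : t j - x ≠ 0 := sub_ne_zero.2 (hxt j).symm
    have h2 : t i - t j ≠ 0 := sub_ne_zero.2 fun e => hji (hinj e).symm
    have h3 : t j - t i = -(t i - t j) := by ring
    rw [h3]
    field_simp
    ring
  have hb' := hb i
  rw [e2]
  have : (1 - μ + ((∑ s, (m s : ℂ)) - 2 * (m' : ℂ)) / 2) / t i * t i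
     = (1 - μ + ((∑ s, (m s : ℂ)) - 2 * (m' : ℂ)) / 2) := by field_simp
  linear_combination e1 + (t i - x)⁻¹ * t i * hb' - (t i - x)⁻¹ * this

lemma scalar_eq (m : Fin n → ℕ) (z : Fin n → ℂ) (hz0 : ∀ s, z s ≠ 0) (hz : Function.Injective z)
    (μ : ℂ) {m' : ℕ} (t : Fin m' → ℂ) (ht : BAE m z μ t)
    (x : ℂ) (hx : ∀ s, x ≠ z s) (hxt : ∀ i, x ≠ t i) (A : Fin n → ℂ)
    (hA : ∀ s, A s = (1 - x / z s)⁻¹) (κ : Fin m' → ℂ)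
    (hκ : ∀ i, κ i = (t i + x) / (2 * (t i - x))) :
    (2 * (Real.pi : ℂ) * I) ^ 2 *
      (-(μ / 2) ^ 2 + μ * (∑ s, (A s - 1 / 2) * ((m s : ℂ) / 2))
        - (∑ s, (A s - 1 / 2) * ((m s : ℂ) / 2)) ^ 2
        - (∑ s, (A s * A s - A s) * ((m s : ℂ) / 2)) - (m' : ℂ) / 4
        + ∑ i, (2 * (∑ s, (A s - 1 / 2) * ((m s : ℂ) / 2)) - μ) * κ i
        - ∑ i, ∑ j ∈ univ.erase i, κ i * κ j) = E2fun m z μ t x := by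
  obtain ⟨hinj, ht0, htz, hb⟩ := ht
  have hA' : ∀ s, A s = z s / (z s - x) := fun s => by
    rw [hA, one_sub_div (hz0 s), inv_div]
  have hzx : ∀ s, z s - x ≠ 0 := fun s => sub_ne_zero.2 (hx s).symm
  have htx : ∀ s, t s - x ≠ 0 := fun s => sub_ne_zero.2 (hxt s).symm
  have htz' : ∀ i s, t i - z s ≠ 0 := fun i s => sub_ne_zero.2 (htz i s)
  set u : Fin m' → ℂ := fun i => t i / (t i - x) with hu
  have hκu : ∀ i, κ i = u i - 1 / 2 := fun i => by
    rw [hκ, hu]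
    have := htx i
    field_simp
    ring
  set T := ∑ i, u i with hT
  set B := ∑ s, (m s : ℂ) * A s with hB
  set M := ∑ s, (m s : ℂ) with hM
  have hl : ∑ s, (A s - 1 / 2) * ((m s : ℂ) / 2) = B / 2 - M / 4 := by
    rw [hB, hM, Finset.sum_div, Finset.sum_div, ← Finset.sum_sub_distrib]
    exact Finset.sum_congr rfl fun s _ => by ring
  have hsκ : ∑ i, κ i = T - (m' : ℂ) / 2 := by
    simp only [hκu, Finset.sum_sub_distrib, Finset.sum_const, Finset.card_univ, Fintype.card_fin,
      nsmul_eq_mul]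
    ring
  have hsκ2 : ∑ i, κ i ^ 2 = (m' : ℂ) / 4 + ∑ i, (u i ^ 2 - u i) := by
    have : (m' : ℂ) / 4 = ∑ i : Fin m', (1 / 4 : ℂ) := by
      simp [div_eq_mul_inv]
    rw [this, ← Finset.sum_add_distrib]
    exact Finset.sum_congr rfl fun i _ => by rw [hκu]; ring
  have hT2 : T ^ 2 = ∑ i, u i ^ 2 + 2 * ∑ i, u i * ∑ j ∈ univ.erase i, t j / (t j - t i) := by
    apply sq_sum_pf
    intro i j hij
    have h1 := htx i
    have h2 := htx j
    have h3 : t i - t j ≠ 0 := sub_ne_zero.2 fun e => hij (hinj e)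
    have h4 : t j - t i = -(t i - t j) := by ring
    simp only [hu, h4]
    field_simp
    ring
  have hB2 : B ^ 2 = ∑ s, ((m s : ℂ) * A s) ^ 2
      + 2 * ∑ s, (m s : ℂ) * A s * ∑ p ∈ univ.erase s, (m p : ℂ) * z p / (z p - z s) := by
    apply sq_sum_pf
    intro i j hij
    have h1 := hzx i
    have h2 := hzx j
    have h3 : z i - z j ≠ 0 := sub_ne_zero.2 fun e => hij (hz e)
    have h4 : z j - z i = -(z i - z j) := by ring
    simp only [hA', h4]
    field_simp
    ring
  have hBT : B * T = ∑ s, (m s : ℂ) * A s * ∑ i, t i / (t i - z s)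
      - ∑ i, u i * ∑ s, (m s : ℂ) * z s / (t i - z s) := by
    have : ∑ i, u i * ∑ s, (m s : ℂ) * z s / (t i - z s)
        = ∑ s, ∑ i, u i * ((m s : ℂ) * z s / (t i - z s)) := by
      rw [Finset.sum_comm]
      simp only [Finset.mul_sum]
    rw [this, hB, hT, Finset.sum_mul_sum, ← Finset.sum_sub_distrib]
    refine Finset.sum_congr rfl fun s _ => ?_
    rw [Finset.mul_sum, ← Finset.sum_sub_distrib]
    refine Finset.sum_congr rfl fun i _ => ?_
    have h1 := hzx s
    have h2 := htx i
    have h3 := htz' i s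
    simp only [hA', hu]
    field_simp
    ring
  have hti : ∑ i, u i * (1 + 2 * (∑ j ∈ univ.erase i, t j / (t j - t i)) + (μ + M / 2 - (m' : ℂ))
      + ∑ s, (m s : ℂ) * z s / (t i - z s)) = 0 := by
    refine Finset.sum_eq_zero fun i _ => ?_
    have e1 : 2 * (∑ j ∈ univ.erase i, t j / (t j - t i))
        = 2 * ((m' : ℂ) - 1) - t i * ∑ j ∈ univ.erase i, 2 / (t i - t j) := by
      have : ((m' : ℂ) - 1) = ∑ j ∈ univ.erase i, (1 : ℂ) := by
        have : 1 ≤ m' := i.pos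
        simp [Finset.card_erase_of_mem, Nat.cast_sub this]
      rw [this]
      simp only [Finset.mul_sum, ← Finset.sum_sub_distrib]
      refine Finset.sum_congr rfl fun j hj => ?_
      have hji := Finset.ne_of_mem_erase hj
      have h2 : t i - t j ≠ 0 := sub_ne_zero.2 fun e => hji (hinj e).symm
      have h3 : t j - t i = -(t i - t j) := by ring
      rw [h3]
      field_simp
      ring
    have e2 : ∑ s, (m s : ℂ) * z s / (t i - z s)
        = t i * (∑ s, (m s : ℂ) / (t i - z s)) - M := by
      rw [hM, Finset.mul_sum, ← Finset.sum_sub_distrib]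
      refine Finset.sum_congr rfl fun s _ => ?_
      have := htz' i s
      field_simp
      ring
    have e3 : (1 - μ + (M - 2 * (m' : ℂ)) / 2) / t i * t i
      = (1 - μ + (M - 2 * (m' : ℂ)) / 2) := by
      have := ht0 i
      field_simp
    rw [e1, e2]
    linear_combination -(u i * t i) * hb i + u i * e3
  have hti' : T + 2 * (∑ i, u i * ∑ j ∈ univ.erase i, t j / (t j - t i))
      + (μ + M / 2 - (m' : ℂ)) * T + ∑ i, u i * ∑ s, (m s : ℂ) * z s / (t i - z s) = 0 := by
    rw [← hti, hT]
    simp only [Finset.mul_sum _ _ (2 : ℂ), Finset.mul_sum _ _ (μ + M / 2 - (m' : ℂ)),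
      ← Finset.sum_add_distrib]
    refine Finset.sum_congr rfl fun i _ => ?_
    rw [← Finset.mul_sum]
    ring
  have hk : ∀ s, ((m s : ℂ) * ((m s : ℂ) + 2) / 4 + kEig m z μ t s) / (1 - x / z s)
          - ((m s : ℂ) * ((m s : ℂ) + 2) / 4) / (1 - x / z s) ^ 2
      = -(1 / 4) * ((m s : ℂ) * A s) ^ 2 - (A s * A s - A s) * ((m s : ℂ) / 2)
        + (μ / 2 + (M - 2 * (m' : ℂ)) / 4) * ((m s : ℂ) * A s)
        + (m s : ℂ) * A s * (∑ i, t i / (t i - z s))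
        - 1 / 2 * ((m s : ℂ) * A s * ∑ p ∈ univ.erase s, (m p : ℂ) * z p / (z p - z s)) := by
    intro s
    have e1 : ∑ p ∈ univ.erase s, (m p : ℂ) * z s / (z s - z p)
        = (M - (m s : ℂ)) - ∑ p ∈ univ.erase s, (m p : ℂ) * z p / (z p - z s) := by
      rw [hM, ← Finset.add_sum_erase _ _ (Finset.mem_univ s), add_sub_cancel_left,
        ← Finset.sum_sub_distrib]
      refine Finset.sum_congr rfl fun p hp => ?_
      have hps := Finset.ne_of_mem_erase hp
      have h2 : z s - z p ≠ 0 := sub_ne_zero.2 fun e => hps (hz e).symm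
      have h3 : z p - z s = -(z s - z p) := by ring
      rw [h3]
      field_simp
      ring
    have e2 : ∑ i, z s / (t i - z s) = (∑ i, t i / (t i - z s)) - (m' : ℂ) := by
      have : (m' : ℂ) = ∑ i : Fin m', (1 : ℂ) := by simp
      rw [this, ← Finset.sum_sub_distrib]
      refine Finset.sum_congr rfl fun i _ => ?_
      have := htz' i s
      field_simp
      ring
    unfold kEig
    rw [e1, e2, div_eq_mul_inv _ (1 - x / z s), div_eq_mul_inv _ ((1 - x / z s) ^ 2), ← inv_pow,
      ← hA, ← hM]
    ring
  unfold E2fun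
  congr 1
  rw [sum_erase_mul, hsκ2, Finset.sum_congr rfl fun s _ => hk s, ← Finset.mul_sum, hsκ, hl]
  simp only [Finset.sum_add_distrib, Finset.sum_sub_distrib, ← Finset.mul_sum]
  rw [← hB, ← hM, ← hT]
  linear_combination -hti' - hT2 - hB2 / 4 + hBT
end scalarpart

section finalpart

lemma M11_eq {n : ℕ} (m : Fin n → ℕ) (z : Fin n → ℂ) (x : ℂ) (v : TV m) :
    M11 m z x v = (2 * (Real.pi : ℂ) * I) •
      lc (E11 m) ((fun s => (1 - x / z s)⁻¹) - (fun _ => 1 / 2)) v := by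
  simp only [M11, e11T, lc_apply, LinearMap.sub_apply, LinearMap.smul_apply, LinearMap.sum_apply,
    Finset.smul_sum, ← Finset.sum_sub_distrib, Pi.sub_apply]
  refine Finset.sum_congr rfl fun s _ => ?_
  module

lemma M22_eq {n : ℕ} (m : Fin n → ℕ) (z : Fin n → ℂ) (x : ℂ) (v : TV m) :
    M22 m z x v = -((2 * (Real.pi : ℂ) * I) •
      lc (E11 m) ((fun s => (1 - x / z s)⁻¹) - (fun _ => 1 / 2)) v) := by
  simp only [M22, e22T, lc_apply, LinearMap.sub_apply, LinearMap.smul_apply, LinearMap.sum_apply,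
    Finset.smul_sum, ← Finset.sum_sub_distrib, Pi.sub_apply, ← Finset.sum_neg_distrib, E22_eq,
    LinearMap.neg_apply]
  refine Finset.sum_congr rfl fun s _ => ?_
  module

lemma M12_eq {n : ℕ} (m : Fin n → ℕ) (z : Fin n → ℂ) (x : ℂ) (v : TV m) :
    M12 m z x v = (2 * (Real.pi : ℂ) * I) •
      lc (E21 m) ((fun s => (1 - x / z s)⁻¹) - 1) v := by
  simp only [M12, e21T, lc_apply, LinearMap.sub_apply, LinearMap.smul_apply, LinearMap.sum_apply,
    Finset.smul_sum, ← Finset.sum_sub_distrib, Pi.sub_apply, Pi.one_apply]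
  refine Finset.sum_congr rfl fun s _ => ?_
  module

lemma M21_eq {n : ℕ} (m : Fin n → ℕ) (z : Fin n → ℂ) (x : ℂ) (v : TV m) :
    M21 m z x v = (2 * (Real.pi : ℂ) * I) • lc (E12 m) (fun s => (1 - x / z s)⁻¹) v := by
  simp only [M21, lc_apply, LinearMap.smul_apply, LinearMap.sum_apply]

lemma M22d_eq {n : ℕ} (m : Fin n → ℕ) (z : Fin n → ℂ) (hz0 : ∀ s, z s ≠ 0) (x : ℂ)
    (hx : ∀ s, x ≠ z s) (v : TV m) :
    x • M22d m z x v = -((2 * (Real.pi : ℂ) * I) •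
      lc (E11 m) ((fun s => (1 - x / z s)⁻¹) * (fun s => (1 - x / z s)⁻¹)
        - (fun s => (1 - x / z s)⁻¹)) v) := by
  simp only [M22d, lc_apply, LinearMap.smul_apply, LinearMap.sum_apply,
    Finset.smul_sum, Pi.sub_apply, Pi.mul_apply, ← Finset.sum_neg_distrib, E22_eq,
    LinearMap.neg_apply]
  refine Finset.sum_congr rfl fun s _ => ?_
  have h1 : z s - x ≠ 0 := sub_ne_zero.2 (hx s).symm
  have h3 := hz0 s
  have h4 : (1 - x / z s)⁻¹ = z s / (z s - x) := by
    rw [one_sub_div h3, inv_div]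
  have h5 : x * ((z s)⁻¹ * ((1 - x / z s)⁻¹) ^ 2)
      = (1 - x / z s)⁻¹ * (1 - x / z s)⁻¹ - (1 - x / z s)⁻¹ := by
    rw [h4]
    field_simp
    ring
  rw [← h5]
  module

lemma D2_eq {n : ℕ} (m : Fin n → ℕ) (z : Fin n → ℂ) (hz0 : ∀ s, z s ≠ 0) (μ x : ℂ)
    (hx : ∀ s, x ≠ z s) (v : TV m) :
    D2 m z μ x v = (2 * (Real.pi : ℂ) * I) ^ 2 •
      Dred (E21 m) (E11 m) (E12 m) μ (fun s => (1 - x / z s)⁻¹) v := by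
  unfold D2 Dred
  simp only [LinearMap.sub_apply, LinearMap.add_apply, Module.End.mul_apply, LinearMap.smul_apply,
    Module.End.one_apply, M11_eq, M22_eq, M12_eq, M21_eq, map_add, map_smul, map_neg]
  rw [mul_smul _ x, M22d_eq m z hz0 x hx]
  module

lemma main_generic (n : ℕ) (m : Fin n → ℕ)
    (z : Fin n → ℂ) (hz0 : ∀ s, z s ≠ 0) (hz : Function.Injective z)
    (μ : ℂ) (m' : ℕ) (t : Fin m' → ℂ) (ht : BAE m z μ t)
    (x : ℂ) (hx : ∀ s, x ≠ z s) (hxt : ∀ i, x ≠ t i) :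
    D2 m z μ x (betheVec m z t) = E2fun m z μ t x • betheVec m z t := by
  obtain ⟨hinj, ht0, htz, hb⟩ := id ht
  have htx : ∀ s, t s - x ≠ 0 := fun s => sub_ne_zero.2 (hxt s).symm
  have hzx : ∀ s, z s - x ≠ 0 := fun s => sub_ne_zero.2 (hx s).symm
  have htz' : ∀ i s, t i - z s ≠ 0 := fun i s => sub_ne_zero.2 (htz i s)
  have hA' : ∀ s, (1 - x / z s)⁻¹ = z s / (z s - x) := fun s => by
    rw [one_sub_div (hz0 s), inv_div]
  rw [D2_eq m z hz0 μ x hx, betheVec_eq]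
  have key := D_p (F := E21 m) (h := E11 m) (E := E12 m) (rel_FF m) (rel_hF m) (rel_EF m)
    (fun s => (m s : ℂ) / 2) (fun i s => (t i - z s)⁻¹)
    (fun S => Phi m (∏ i ∈ S, Lf z (t i)))
    (by intro s; simpa using Phi_one_h m s) (by intro s; simpa using Phi_one_E m s)
    (by
      intro i S hi
      simp only [Finset.prod_insert hi, Phi_Lf_mul])
    μ (fun s => (1 - x / z s)⁻¹) Finset.univ
    (fun i => (t i + x) / (2 * (t i - x))) (fun i => (t i - x)⁻¹)
    (fun i j => t i * (t i - x)⁻¹ / (t j - t i))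
    (fun i j => x * (t i - x)⁻¹ * (t j - x)⁻¹ - t i * (t i - x)⁻¹ / (t j - t i))
    (by
      intro i _
      ext s
      simp only [Pi.mul_apply, Pi.sub_apply, Pi.add_apply, Pi.smul_apply, smul_eq_mul,
        Pi.one_apply, hA']
      have h1 := hzx s
      have h2 := htx i
      have h3 := htz' i s
      field_simp
      ring)
    (by
      intro i _ j _ hij
      ext s
      simp only [Pi.mul_apply, Pi.sub_apply, Pi.add_apply, Pi.smul_apply, smul_eq_mul,
        Pi.one_apply, hA']
      have h1 := hzx s
      have h2 := htx i
      have h3 := htz' i s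
      have h4 := htx j
      have h5 := htz' j s
      have h6 : t j - t i ≠ 0 := sub_ne_zero.2 fun e => hij (hinj e).symm
      field_simp
      ring)
    (fun i _ => bae_hB m z hz0 μ t ht x hx hxt i)
  rw [key, smul_smul]
  congr 1
  rw [Finset.card_univ, Fintype.card_fin]
  exact scalar_eq m z hz0 hz μ t ht x hx hxt _ (fun _ => rfl) _ (fun _ => rfl)

end finalpart

/-- Lemma 5.4 of the paper.  If `t⁰` is a solution of the Bethe ansatz
equations for `(z; μ; V[ν])`, `ν = M - 2m'`, then for every `x ∈ ℂ∖{z_1,…,z_n}`: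
`D₂(x) ω(t⁰,z) = (2πi)² [ -(μ+ν/2)²/4 + Σ_s ( (m_s(m_s+2)/4 + k_s)/(1-x/z_s)
- (m_s(m_s+2)/4)/(1-x/z_s)² ) ] ω(t⁰,z)`. -/
theorem statement6
    (n : ℕ) (hn : 1 < n) (m : Fin n → ℕ) (hm : ∀ s, 0 < m s)
    (M : ℕ) (hM : M = ∑ s, m s)
    (z : Fin n → ℂ) (hz0 : ∀ s, z s ≠ 0) (hz : Function.Injective z)
    (μ : ℂ) (m' : ℕ) (ν : ℤ) (hν : ν = (M : ℤ) - 2 * (m' : ℤ))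
    (t : Fin m' → ℂ) (ht : BAE m z μ t)
    (x : ℂ) (hx : ∀ s, x ≠ z s) :
    D2 m z μ x (betheVec m z t) = E2fun m z μ t x • betheVec m z t := by
  set v := betheVec m z t with hv
  have hne : ∀ s, 1 - x / z s ≠ 0 := by
    intro s h
    apply hx s
    have := hz0 s
    field_simp at h
    rw [mul_zero] at h
    exact (sub_eq_zero.1 h).symm
  have hAc : ∀ s, ContinuousAt (fun y : ℂ => (1 - y / z s)⁻¹) x := by
    intro s
    refine ContinuousAt.inv₀ ?_ (hne s)
    fun_prop
  have hE : ContinuousAt (fun y : ℂ => E2fun m z μ t y) x := by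
    unfold E2fun
    simp only [div_eq_mul_inv _ (1 - _ / z _), div_eq_mul_inv _ ((1 - _ / z _) ^ 2), ← inv_pow]
    fun_prop
  ext l
  have hD : ContinuousAt (fun y : ℂ => D2 m z μ y v l) x := by
    have hred : ContinuousAt (fun y : ℂ => ((2 * (Real.pi : ℂ) * I) ^ 2 •
      Dred (E21 m) (E11 m) (E12 m) μ (fun s => (1 - y / z s)⁻¹) v) l) x := by
      unfold Dred
      simp only [lc_apply, map_sum, map_smul, Pi.smul_apply, Pi.add_apply, Pi.sub_apply,
        Pi.neg_apply, Finset.sum_apply, smul_eq_mul, Pi.mul_apply, Pi.one_apply]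
      fun_prop
    refine hred.congr ?_
    have : ∀ᶠ y in nhds x, ∀ s, y ≠ z s :=
      Filter.eventually_all.2 fun s => isOpen_ne.mem_nhds (hx s)
    filter_upwards [this] with y hy
    rw [D2_eq m z hz0 μ y hy]
  have hR : ContinuousAt (fun y : ℂ => (E2fun m z μ t y • v) l) x := by
    simp only [Pi.smul_apply, smul_eq_mul]
    fun_prop
  have hev : ∀ᶠ y in nhdsWithin x {x}ᶜ, D2 m z μ y v l = (E2fun m z μ t y • v) l := by
    have h1 : ∀ᶠ y in nhdsWithin x {x}ᶜ, ∀ s, y ≠ z s :=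
      Filter.eventually_all.2 fun s => mem_nhdsWithin_of_mem_nhds (isOpen_ne.mem_nhds (hx s))
    have h2 : ∀ᶠ y in nhdsWithin x {x}ᶜ, ∀ i, y ≠ t i := by
      refine Filter.eventually_all.2 fun i => ?_
      by_cases h : x = t i
      · rw [← h]
        exact self_mem_nhdsWithin
      · exact mem_nhdsWithin_of_mem_nhds (isOpen_ne.mem_nhds h)
    filter_upwards [h1, h2] with y hy1 hy2
    rw [hv, main_generic n m z hz0 hz μ m' t ht y hy1 hy2]
  have t1 := hD.tendsto.mono_left (nhdsWithin_le_nhds (s := {x}ᶜ))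
  have t2 := hR.tendsto.mono_left (nhdsWithin_le_nhds (s := {x}ᶜ))
  exact tendsto_nhds_unique (t1.congr' hev) t2


end
end Paper
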